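/- Let F₂ be the free group of rank two, let C be the set of conjugacy classes of F₂, and let G = Out(F₂) = Aut(F₂)/F₂ act naturally on C (via the action of Aut(F₂) on F₂). Then there exists a conjugacy class c ∈ C such that c is disjoint from the subgroup of F₂ generated by the union of the conjugacy classes g·c for g ∈ G \ {e}; that is, c ∩ ⟨ g·c : g ∈ G \ {e} ⟩_{F₂} = ∅. -/

import Mathlib

open MeasureTheory

namespace IRSPaper


/-! ## Basic setup: the space of subgroups, invariant random subgroups -/

/-- The conjugation action of a group on its space of subgroups: `g • H = gHg⁻¹`. -/
def conjSub {G : Type*} [Group G] (g : G) (H : Subgroup G) : Subgroup G :=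
  Subgroup.map ((MulAut.conj g).toMonoidHom) H

/-- The topology on the space of subgroups of `G`, induced from the product topology
on `G → Bool` (i.e. the topology of `2^G`). -/
noncomputable instance instTopSub (G : Type*) [Group G] : TopologicalSpace (Subgroup G) :=
  TopologicalSpace.induced
    (fun (H : Subgroup G) (g : G) => @decide (g ∈ H) (Classical.dec _)) inferInstance

/-- The Borel σ-algebra on the space of subgroups. -/
noncomputable instance instMeasSub (G : Type*) [Group G] : MeasurableSpace (Subgroup G) :=
  borel _

instance instBorelSub (G : Type*) [Group G] : BorelSpace (Subgroup G) := ⟨rfl⟩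

/-- An invariant random subgroup: a Borel probability measure on `Sub(G)` which is invariant
under the conjugation action of `G`. -/
def IsIRS {G : Type*} [Group G] (θ : Measure (Subgroup G)) : Prop :=
  IsProbabilityMeasure θ ∧ ∀ g : G, Measure.map (conjSub g) θ = θ

/-- The basic set `N_F = {H ∈ Sub(G) : F ⊆ H}`. -/
def NSet {G : Type*} [Group G] (F : Set G) : Set (Subgroup G) :=
  {H : Subgroup G | F ⊆ (H : Set G)}

/-- For `Γ ≤ Δ` and `S ⊆ Δ`, the set of subgroups of `Γ` containing every element of `Γ`
whose image in `Δ` lies in `S`.  When `S = t⁻¹Ft ⊆ Γ`, this is exactly the basic set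
`N_{t⁻¹Ft}^Γ ⊆ Sub(Γ)`. -/
def NpullSet {Δ : Type*} [Group Δ] (Γ : Subgroup Δ) (S : Set Δ) : Set (Subgroup ↥Γ) :=
  {Λ : Subgroup ↥Γ | ∀ x : ↥Γ, (x : Δ) ∈ S → x ∈ Λ}

/-- `T` is a transversal for the left cosets `Δ/Γ`: each left coset `dΓ` contains exactly
one element of `T`. -/
def IsLeftTransversal {Δ : Type*} [Group Δ] (Γ : Subgroup Δ) (T : Set Δ) : Prop :=
  ∀ d : Δ, ∃! t : Δ, t ∈ T ∧ d⁻¹ * t ∈ Γ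

/-- The defining property of the co-induced invariant random subgroup
`ν = CIND_Γ^Δ(θ)` (with respect to the transversal `T`):  for every finite `F ⊆ Δ`,
`ν(N_F) = 0` if `F ⊄ core_Δ(Γ)` and `ν(N_F) = ∏_{t ∈ T} θ(N_{t⁻¹Ft}^Γ)` if `F ⊆ core_Δ(Γ)`. -/
def CindSpec {Δ : Type*} [Group Δ] (Γ : Subgroup Δ) (T : Set Δ)
    (θ : Measure (Subgroup ↥Γ)) (ν : Measure (Subgroup Δ)) : Prop :=
  ∀ F : Finset Δ,
    (¬ (F : Set Δ) ⊆ (Γ.normalCore : Set Δ) → ν (NSet (F : Set Δ)) = 0) ∧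
    ((F : Set Δ) ⊆ (Γ.normalCore : Set Δ) →
      ν (NSet (F : Set Δ)) =
        ∏' t : T, θ (NpullSet Γ ((fun d => (t : Δ)⁻¹ * d * (t : Δ)) '' (F : Set Δ))))

/-- Ergodicity of a (not necessarily probability-) measure-preserving action given by
an explicit family of maps: every invariant measurable set is null or conull. -/
def ErgodicAct {G α : Type*} [MeasurableSpace α] (act : G → α → α) (μ : Measure α) : Prop :=
  ∀ s : Set α, MeasurableSet s → (∀ g : G, act g ⁻¹' s = s) → μ s = 0 ∨ μ sᶜ = 0

/-- Weak mixing of an action: the diagonal action on the square is ergodic. -/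
def WeaklyMixingAct {G α : Type*} [MeasurableSpace α] (act : G → α → α) (μ : Measure α) : Prop :=
  ErgodicAct (fun (g : G) (p : α × α) => (act g p.1, act g p.2)) (μ.prod μ)

/-- A measure is non-atomic (has no atoms) if every singleton is null. -/
def NonAtomicMeasure {α : Type*} [MeasurableSpace α] (μ : Measure α) : Prop :=
  ∀ x : α, μ {x} = 0

/-- The kernel of an IRS `θ` of `Γ`: the set of `γ ∈ Γ` with `θ(N_γ) = 1`.  (For a probability
measure this set is a subgroup; taking `Subgroup.closure` makes it a `Subgroup` on the nose.) -/
def kerIRS {Δ : Type*} [Group Δ] (Γ : Subgroup Δ) (θ : Measure (Subgroup ↥Γ)) : Subgroup ↥Γ :=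
  Subgroup.closure {x : ↥Γ | θ {Λ : Subgroup ↥Γ | x ∈ Λ} = 1}

/-- `core_Δ(ker(θ))`, viewed as a subgroup of `Δ`. -/
def coreKer {Δ : Type*} [Group Δ] (Γ : Subgroup Δ) (θ : Measure (Subgroup ↥Γ)) : Subgroup Δ :=
  ((kerIRS Γ θ).map Γ.subtype).normalCore

/-! ## The free group `F₂`, small cancellation notions -/

/-- The free group on two generators. -/
abbrev F2 : Type := FreeGroup Bool

/-- The first generator `a` of `F₂`. -/
def genA : F2 := FreeGroup.of true

/-- The second generator `b` of `F₂`. -/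
def genB : F2 := FreeGroup.of false

/-- The length `|x|` of the reduced word representing `x`. -/
def flen (x : F2) : ℕ := x.toWord.length

/-- `x` is cyclically reduced iff it has minimal length in its conjugacy class. -/
def CyclRed (x : F2) : Prop := ∀ g : F2, flen x ≤ flen (g * x * g⁻¹)

/-- The length `‖x‖` of the cyclically reduced word conjugate to `x`. -/
noncomputable def cyclen (x : F2) : ℕ := sInf (Set.range fun g : F2 => flen (g * x * g⁻¹))

/-- `u` is an initial segment (prefix) of the reduced word of `x`. -/
def IsInitSeg (u x : F2) : Prop := ∃ v : F2, x = u * v ∧ flen x = flen u + flen v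

/-- `S̃`: the set of all cyclically reduced cyclic conjugates of the words in `S` and of their
inverses.  (The cyclically reduced cyclic conjugates of a word `s` are exactly the cyclically
reduced elements of the conjugacy class of `s`.) -/
def tildeSet (S : Set F2) : Set F2 :=
  {y : F2 | CyclRed y ∧ ∃ s ∈ S, IsConj s y ∨ IsConj s⁻¹ y}

/-- The `C'(1/6)` small cancellation property for a set of words `S ⊆ F₂`. -/
def C'sixth (S : Set F2) : Prop :=
  ∀ x ∈ tildeSet S, ∀ y ∈ tildeSet S, x ≠ y →
    ∀ u : F2, IsInitSeg u x → IsInitSeg u y → 6 * flen u < min (flen x) (flen y)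

/-- The word `w = a b a² b² ⋯ aⁿ bⁿ`. -/
def wordW (n : ℕ) : F2 :=
  ((List.range n).map (fun i => genA ^ (i + 1) * genB ^ (i + 1))).prod

/-- The group of inner automorphisms of `F₂`, as a subgroup of `Aut(F₂)`;
this is the image of `F₂` in `Aut(F₂)`, identified with `F₂` itself. -/
def innerF2 : Subgroup (MulAut F2) := (MulAut.conj : F2 →* MulAut F2).range

/-!
By Nielsen's theorem every automorphism of `F₂` maps `c = [a, b]` to a conjugate of `c` or `c⁻¹`,
and an automorphism acting trivially on the abelianization `ℤ²` is inner. The conjugates `g c g⁻¹`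
are loops around the unit squares of the grid `ℤ²`, the position of the square being the vector of
exponent sums of `g`. The word `w = [[c, a²ca⁻²], b³cb⁻³]` involves the squares at `(0, 0)`,
`(2, 0)` and `(0, 3)`, and `φ w` those at the images of these three points under an affine map with
the linear part of `φ`. The three points are chosen so that such a map permutes them only if its
linear part is the identity, that is, if `φ` is inner.

Label the edges of the grid by elements of a group such that the holonomy around a square is trivial
except at these three points, where it is `x`, `y`, `z`. For non-inner `φ`, some entry of the
iterated commutator `φ w` has trivial holonomy, hence so does `φ w`. But the holonomy of `w` is
`[[x, y], z]`, which is nontrivial for suitable permutations.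
-/

open FreeGroup (mk of lift IsReduced)

section Overlap

variable {β : Type*} [DecidableEq β]

/-- The length of the longest common prefix of two words. -/
def commonPrefixLength : List β → List β → ℕ
  | x :: xs, y :: ys => if x = y then commonPrefixLength xs ys + 1 else 0
  | [], _ => 0
  | _ :: _, [] => 0

lemma min_commonPrefixLength_le : ∀ l₁ l₂ l₃ : List β,
    min (commonPrefixLength l₁ l₂) (commonPrefixLength l₂ l₃) ≤ commonPrefixLength l₁ l₃
  | [], _, _ => by simp [commonPrefixLength]
  | _ :: _, [], _ => by simp [commonPrefixLength]
  | _ :: _, _ :: _, [] => by simp [commonPrefixLength]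
  | x :: xs, y :: ys, z :: zs => by
      have ih := min_commonPrefixLength_le xs ys zs
      simp only [commonPrefixLength]
      split_ifs <;> first | omega | simp_all

variable {α : Type*}

lemma isReduced_invRev {L : List (α × Bool)} (h : IsReduced L) :
    IsReduced (FreeGroup.invRev L) := by
  classical
  apply IsReduced.of_reduce_eq
  rw [FreeGroup.reduce_invRev, h.reduce_eq]

lemma mk_cons (x : α × Bool) (L : List (α × Bool)) : mk (x :: L) = mk [x] * mk L := by
  rw [FreeGroup.mul_mk, List.singleton_append]

lemma isReduced_invRev_cons_append_cons {x y : α × Bool} {L₁ L₂ : List (α × Bool)}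
    (h₁ : IsReduced (x :: L₁)) (h₂ : IsReduced (y :: L₂)) (hxy : x ≠ y) :
    IsReduced (FreeGroup.invRev (x :: L₁) ++ y :: L₂) := by
  refine List.isChain_append.2 ⟨isReduced_invRev h₁, h₂, fun s hs t ht hst ↦ ?_⟩
  obtain rfl : (x.1, !x.2) = s := by simpa [FreeGroup.invRev] using hs
  obtain rfl : y = t := by simpa using ht
  by_contra hsign
  exact hxy (Prod.ext hst (by simpa using hsign))

variable [DecidableEq α]

lemma norm_mk_of_isReduced {L : List (α × Bool)} (h : IsReduced L) : (mk L).norm = L.length := by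
  rw [FreeGroup.norm, FreeGroup.toWord_mk, h.reduce_eq]

lemma norm_inv_mk_mul_mk : ∀ {L₁ L₂ : List (α × Bool)}, IsReduced L₁ → IsReduced L₂ →
    ((mk L₁)⁻¹ * mk L₂).norm + 2 * commonPrefixLength L₁ L₂ = L₁.length + L₂.length
  | [], L₂, _, h₂ => by
      simp [commonPrefixLength, ← FreeGroup.one_eq_mk, norm_mk_of_isReduced h₂]
  | x :: L₁, [], h₁, _ => by
      rw [← FreeGroup.one_eq_mk, mul_one, FreeGroup.norm_inv_eq, norm_mk_of_isReduced h₁]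
      simp [commonPrefixLength]
  | x :: L₁, y :: L₂, h₁, h₂ => by
      by_cases hxy : x = y
      · subst hxy
        have ih := norm_inv_mk_mul_mk (h₁.infix (List.suffix_cons x L₁).isInfix)
          (h₂.infix (List.suffix_cons x L₂).isInfix)
        have hcancel : (mk (x :: L₁))⁻¹ * mk (x :: L₂) = (mk L₁)⁻¹ * mk L₂ := by
          rw [mk_cons x L₁, mk_cons x L₂]
          group
        simp only [hcancel, commonPrefixLength, if_true, List.length_cons]
        omega
      · rw [FreeGroup.inv_mk, FreeGroup.mul_mk,
          norm_mk_of_isReduced (isReduced_invRev_cons_append_cons h₁ h₂ hxy)]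
        simp [commonPrefixLength, hxy]

/-- The length of the longest common prefix of two reduced words, that is, the Gromov product
based at `1` in the Cayley tree. Exactly `overlap x⁻¹ y` letters of each factor cancel
in the product `x * y`. -/
def overlap (x y : FreeGroup α) : ℕ := commonPrefixLength x.toWord y.toWord

lemma norm_inv_mul_add_two_mul_overlap (x y : FreeGroup α) :
    (x⁻¹ * y).norm + 2 * overlap x y = x.norm + y.norm := by
  have h := norm_inv_mk_mul_mk (FreeGroup.isReduced_toWord (x := x))
    (FreeGroup.isReduced_toWord (x := y))
  rwa [FreeGroup.mk_toWord, FreeGroup.mk_toWord] at h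

lemma norm_mul_add_two_mul_overlap (x y : FreeGroup α) :
    (x * y).norm + 2 * overlap x⁻¹ y = x.norm + y.norm := by
  simpa using norm_inv_mul_add_two_mul_overlap x⁻¹ y

lemma min_overlap_le (x y z : FreeGroup α) : min (overlap x y) (overlap y z) ≤ overlap x z :=
  min_commonPrefixLength_le _ _ _

lemma overlap_comm (x y : FreeGroup α) : overlap x y = overlap y x := by
  have hxy := norm_inv_mul_add_two_mul_overlap x y
  have hyx := norm_inv_mul_add_two_mul_overlap y x
  have hnorm : (x⁻¹ * y).norm = (y⁻¹ * x).norm := by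
    rw [← FreeGroup.norm_inv_eq, mul_inv_rev, inv_inv]
  omega

lemma reduceCyclically_toWord_ne_nil {x : FreeGroup α} (hx : x ≠ 1) :
    FreeGroup.reduceCyclically x.toWord ≠ [] := by
  intro hnil
  have hconj := FreeGroup.reduceCyclically.conj_conjugator_reduceCyclically x.toWord
  rw [hnil, List.append_nil] at hconj
  apply hx
  rw [← FreeGroup.mk_toWord (x := x), ← hconj, ← FreeGroup.mul_mk, ← FreeGroup.inv_mk,
    mul_inv_cancel]

lemma norm_lt_norm_mul_self {x : FreeGroup α} (hx : x ≠ 1) : x.norm < (x * x).norm := by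
  have hsq := FreeGroup.reduceCyclically.reduce_flatten_replicate_succ
    (FreeGroup.isReduced_toWord (x := x)) 1
  have hlen := congrArg List.length
    (FreeGroup.reduceCyclically.conj_conjugator_reduceCyclically x.toWord)
  have hpos := List.length_pos_iff.2 (reduceCyclically_toWord_ne_nil hx)
  have hnorm : (x * x).norm = (FreeGroup.reduce (List.replicate (1 + 1) x.toWord).flatten).length :=
    by simp [FreeGroup.norm, FreeGroup.toWord_mul, List.replicate]
  rw [hnorm, hsq, FreeGroup.norm]
  simp only [List.length_append, FreeGroup.invRev_length, List.replicate, List.flatten_cons,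
    List.flatten_nil, List.append_nil] at hlen ⊢
  omega

lemma two_mul_overlap_inv_self_lt {x : FreeGroup α} (hx : x ≠ 1) :
    2 * overlap x⁻¹ x < x.norm := by
  have hlt := norm_lt_norm_mul_self hx
  have hsq := norm_mul_add_two_mul_overlap x x
  omega

lemma exists_prefix_of_le_norm (y : FreeGroup α) {m : ℕ} (hm : m ≤ y.norm) :
    ∃ p : FreeGroup α, p.norm = m ∧ (p⁻¹ * y).norm + m = y.norm := by
  have hred := FreeGroup.isReduced_toWord (x := y)
  have htake : IsReduced (y.toWord.take m) := hred.infix (List.take_prefix _ _).isInfix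
  have hdrop : IsReduced (y.toWord.drop m) := hred.infix (List.drop_suffix _ _).isInfix
  have hsplit : (mk (y.toWord.take m))⁻¹ * y = mk (y.toWord.drop m) := by
    rw [inv_mul_eq_iff_eq_mul, FreeGroup.mul_mk, List.take_append_drop, FreeGroup.mk_toWord]
  rw [FreeGroup.norm] at hm
  refine ⟨mk (y.toWord.take m), ?_, ?_⟩
  · rw [norm_mk_of_isReduced htake, List.length_take, min_eq_left hm]
  · rw [hsplit, norm_mk_of_isReduced hdrop, List.length_drop, Nat.sub_add_cancel hm, FreeGroup.norm]

end Overlap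

section NielsenReduced

variable {α β : Type*} [DecidableEq β]

/-- Nielsen's condition on a family of elements of a free group: inside a reduced product of the
`f i` and their inverses, the cancellation with the two neighbours never exhausts a factor. The
factor at the signed letter `y` is `lift f (mk [y])`. -/
def IsNielsenReduced (f : α → FreeGroup β) : Prop :=
  ∀ x y z : α × Bool, IsReduced [x, y] → IsReduced [y, z] →
    overlap (lift f (mk [x]))⁻¹ (lift f (mk [y])) + overlap (lift f (mk [y]))⁻¹ (lift f (mk [z])) <
      (lift f (mk [y])).norm

-- The prefix of the first factor surviving in the product shields the rest of the word from `x`.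
lemma IsNielsenReduced.overlap_lt_and_length_add_overlap_le {f : α → FreeGroup β}
    (hf : IsNielsenReduced f) : ∀ (L : List (α × Bool)) (x y : α × Bool), IsReduced [x, y] →
      IsReduced (y :: L) →
      overlap (lift f (mk [x]))⁻¹ (lift f (mk [y])) <
          overlap (lift f (mk [y])) (lift f (mk (y :: L))) ∧
        (y :: L).length + overlap (lift f (mk [x]))⁻¹ (lift f (mk [y])) ≤
          (lift f (mk (y :: L))).norm
  | [], x, y, hxy, _ => by
      have hlt := hf x y y hxy (by simp)
      have hself := norm_inv_mul_add_two_mul_overlap (lift f (mk [y])) (lift f (mk [y]))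
      rw [inv_mul_cancel, FreeGroup.norm_one] at hself
      simp only [List.length_singleton]
      omega
  | z :: L, x, y, hxy, hL => by
      obtain ⟨hyz, hzL⟩ := FreeGroup.isReduced_cons_cons.1 hL
      have hyz : IsReduced [y, z] := by simpa using hyz
      obtain ⟨hshield, hlen⟩ := hf.overlap_lt_and_length_add_overlap_le L y z hyz hzL
      have hlt := hf x y z hxy hyz
      rw [mk_cons y (z :: L), map_mul]
      set Y := lift f (mk [y])
      set Z := lift f (mk [z])
      set P := lift f (mk (z :: L))
      have hYP : overlap Y⁻¹ P = overlap Y⁻¹ Z := by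
        have h₁ := min_overlap_le Y⁻¹ Z P
        have h₂ := min_overlap_le Y⁻¹ P Z
        rw [overlap_comm P Z] at h₂
        omega
      have hmul := norm_mul_add_two_mul_overlap Y P
      have hprefix := norm_inv_mul_add_two_mul_overlap Y (Y * P)
      rw [inv_mul_cancel_left] at hprefix
      simp only [List.length_cons] at hlen ⊢
      omega

theorem IsNielsenReduced.norm_le_norm_lift [DecidableEq α] {f : α → FreeGroup β}
    (hf : IsNielsenReduced f) (x : FreeGroup α) : x.norm ≤ (lift f x).norm := by
  have hred := FreeGroup.isReduced_toWord (x := x)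
  rw [FreeGroup.norm]
  conv_rhs => rw [← FreeGroup.mk_toWord (x := x)]
  cases hword : x.toWord with
  | nil => simp
  | cons y L =>
    rw [hword] at hred
    have hbound := (hf.overlap_lt_and_length_add_overlap_le L y y (by simp) hred).2
    omega

end NielsenReduced

section NielsenEquiv

variable {G : Type*} [Group G]

/-- `NielsenEquiv u₀ v₀ u v`: the pair `(u, v)` arises from `(u₀, v₀)` by elementary Nielsen moves
and simultaneous conjugations. -/
inductive NielsenEquiv (u₀ v₀ : G) : G → G → Prop
  | refl : NielsenEquiv u₀ v₀ u₀ v₀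
  | swap {u v : G} : NielsenEquiv u₀ v₀ u v → NielsenEquiv u₀ v₀ v u
  | inv {u v : G} : NielsenEquiv u₀ v₀ u v → NielsenEquiv u₀ v₀ u⁻¹ v
  | mul {u v : G} : NielsenEquiv u₀ v₀ u v → NielsenEquiv u₀ v₀ (u * v) v
  | conj {u v : G} (g : G) :
      NielsenEquiv u₀ v₀ u v → NielsenEquiv u₀ v₀ (g * u * g⁻¹) (g * v * g⁻¹)

lemma NielsenEquiv.trans {u₁ v₁ u₂ v₂ u₃ v₃ : G} (h₁₂ : NielsenEquiv u₁ v₁ u₂ v₂)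
    (h₂₃ : NielsenEquiv u₂ v₂ u₃ v₃) : NielsenEquiv u₁ v₁ u₃ v₃ := by
  induction h₂₃ with
  | refl => exact h₁₂
  | swap _ ih => exact ih.swap
  | inv _ ih => exact ih.inv
  | mul _ ih => exact ih.mul
  | conj g _ ih => exact ih.conj g

end NielsenEquiv

section NielsenMinimal

lemma lift_mk_singleton_of_isReduced {G : Type*} [Group G] {f : Bool → G} {x y : Bool × Bool}
    (h : IsReduced [x, y] ∨ IsReduced [y, x]) :
    lift f (mk [x]) = lift f (mk [y]) ∨ lift f (mk [x]) = f (!y.1) ∨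
      lift f (mk [x]) = (f (!y.1))⁻¹ := by
  obtain ⟨i, s⟩ := x
  obtain ⟨j, t⟩ := y
  cases i <;> cases j <;> cases s <;> cases t <;> simp_all [FreeGroup.lift_mk]

variable {α : Type*} [DecidableEq α] {u v : FreeGroup α}

/-- A pair of elements of a free group whose total length is minimal in its Nielsen class. -/
def IsNielsenMinimal (u v : FreeGroup α) : Prop :=
  ∀ u' v', NielsenEquiv u v u' v' → u.norm + v.norm ≤ u'.norm + v'.norm

lemma exists_nielsenEquiv_isNielsenMinimal (u v : FreeGroup α) :
    ∃ u' v', NielsenEquiv u v u' v' ∧ IsNielsenMinimal u' v' := by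
  obtain ⟨⟨u', v'⟩, hequiv, hmin⟩ := exists_minimalFor_of_wellFoundedLT
    (fun p : FreeGroup α × FreeGroup α ↦ NielsenEquiv u v p.1 p.2)
    (fun p ↦ p.1.norm + p.2.norm) ⟨(u, v), .refl⟩
  refine ⟨u', v', hequiv, fun u'' v'' h ↦ ?_⟩
  have hle := @hmin (u'', v'') (hequiv.trans h)
  simp only at hle
  omega

namespace IsNielsenMinimal

lemma of_nielsenEquiv {u' v' : FreeGroup α} (h : IsNielsenMinimal u v)
    (hequiv : NielsenEquiv u v u' v') (hnorm : u'.norm + v'.norm = u.norm + v.norm) :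
    IsNielsenMinimal u' v' :=
  fun _ _ h' ↦ hnorm.trans_le (h _ _ (hequiv.trans h'))

lemma swap (h : IsNielsenMinimal u v) : IsNielsenMinimal v u :=
  h.of_nielsenEquiv (.swap .refl) (add_comm _ _)

lemma inv_left (h : IsNielsenMinimal u v) : IsNielsenMinimal u⁻¹ v :=
  h.of_nielsenEquiv (.inv .refl) (by rw [FreeGroup.norm_inv_eq])

lemma inv_right (h : IsNielsenMinimal u v) : IsNielsenMinimal u v⁻¹ := h.swap.inv_left.swap

lemma norm_left_le_norm_mul (h : IsNielsenMinimal u v) : u.norm ≤ (u * v).norm := by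
  have hmove := h _ _ (.mul .refl)
  omega

lemma norm_right_le_norm_mul (h : IsNielsenMinimal u v) : v.norm ≤ (u * v).norm := by
  have hle := h.inv_left.inv_right.swap.norm_left_le_norm_mul
  rwa [← mul_inv_rev, FreeGroup.norm_inv_eq, FreeGroup.norm_inv_eq] at hle

lemma two_mul_overlap_le_norm_left (h : IsNielsenMinimal u v) :
    2 * overlap u⁻¹ v ≤ u.norm := by
  have hle := h.norm_right_le_norm_mul
  have hmul := norm_mul_add_two_mul_overlap u v
  omega

lemma two_mul_overlap_le_norm_right (h : IsNielsenMinimal u v) :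
    2 * overlap u⁻¹ v ≤ v.norm := by
  have hle := h.norm_left_le_norm_mul
  have hmul := norm_mul_add_two_mul_overlap u v
  omega

/- Otherwise `u = p * q⁻¹` with `p` and `q` of equal length, `q` a prefix of `v` and `p` a prefix
of `v⁻¹`. Conjugating the pair `(v * u, u)` by `q⁻¹` turns it into `(q⁻¹ * v * p, q⁻¹ * p)`,
which is shorter than `(u, v)`. -/
lemma not_half_overlaps (h : IsNielsenMinimal u v) (hu : u ≠ 1)
    (hright : 2 * overlap u⁻¹ v = u.norm) : 2 * overlap v⁻¹ u ≠ u.norm := by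
  intro hleft
  have hu_pos : u.norm ≠ 0 := FreeGroup.norm_eq_zero.not.2 hu
  obtain ⟨q, hq, hqu⟩ := exists_prefix_of_le_norm u⁻¹ (m := overlap u⁻¹ v)
    (by rw [FreeGroup.norm_inv_eq]; omega)
  set p := u * q with hp
  have hp_norm : p.norm = (q⁻¹ * u⁻¹).norm := by
    rw [← FreeGroup.norm_inv_eq, hp, mul_inv_rev]
  rw [FreeGroup.norm_inv_eq] at hqu
  have hvp : (v * p).norm + q.norm ≤ v.norm := by
    have hup := norm_inv_mul_add_two_mul_overlap u p
    rw [hp, inv_mul_cancel_left, ← hp] at hup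
    have htrans := min_overlap_le v⁻¹ u p
    have hmul := norm_mul_add_two_mul_overlap v p
    omega
  have hqvp : (q⁻¹ * (v * p)).norm + 2 * q.norm ≤ v.norm := by
    have hqu' := norm_inv_mul_add_two_mul_overlap q u⁻¹
    have hqv := min_overlap_le q u⁻¹ v
    have hv_vp := norm_inv_mul_add_two_mul_overlap v (v * p)
    have htrans := min_overlap_le q v (v * p)
    have hmul := norm_inv_mul_add_two_mul_overlap q (v * p)
    have hv_le := h.two_mul_overlap_le_norm_right
    have htriangle := FreeGroup.norm_mul_le (v * p) p⁻¹
    rw [inv_mul_cancel_left] at hv_vp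
    rw [mul_inv_cancel_right, FreeGroup.norm_inv_eq] at htriangle
    rw [FreeGroup.norm_inv_eq] at hqu'
    omega
  have hmove := h _ _ (.conj q⁻¹ (.mul (.swap .refl)))
  have hvu : q⁻¹ * (v * u) * q⁻¹⁻¹ = q⁻¹ * (v * p) := by rw [hp]; group
  have hqp : q⁻¹ * u * q⁻¹⁻¹ = q⁻¹ * p := by rw [hp]; group
  have htriangle := FreeGroup.norm_mul_le q⁻¹ p
  rw [hvu, hqp] at hmove
  rw [FreeGroup.norm_inv_eq] at htriangle
  omega

lemma overlap_add_overlap_lt (h : IsNielsenMinimal u v) (hu : u ≠ 1) {x z : FreeGroup α}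
    (hx : x = u ∨ x = v ∨ x = v⁻¹) (hz : z = u ∨ z = v ∨ z = v⁻¹) :
    overlap x⁻¹ u + overlap u⁻¹ z < u.norm := by
  have hself := two_mul_overlap_inv_self_lt hu
  have hv := h.two_mul_overlap_le_norm_left
  have hv' := h.inv_right.two_mul_overlap_le_norm_left
  have hleft := h.swap.two_mul_overlap_le_norm_right
  have hleft' := h.inv_right.swap.two_mul_overlap_le_norm_right
  have hsame := h.not_half_overlaps hu
  have hsame' := h.inv_right.not_half_overlaps hu
  have hopp := min_overlap_le u⁻¹ v⁻¹ u
  have hopp' := min_overlap_le u⁻¹ v u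
  rw [inv_inv] at hleft' hsame'
  rcases hx with rfl | rfl | rfl <;> rcases hz with rfl | rfl | rfl <;>
    (try rw [inv_inv]) <;> omega

end IsNielsenMinimal

theorem IsNielsenMinimal.isNielsenReduced {f : Bool → FreeGroup α}
    (h : IsNielsenMinimal (f true) (f false)) (hf : ∀ i, f i ≠ 1) : IsNielsenReduced f := by
  intro x y z hxy hyz
  have hother : IsNielsenMinimal (f y.1) (f (!y.1)) := by
    cases y.1
    exacts [h.swap, h]
  have hy : IsNielsenMinimal (lift f (mk [y])) (f (!y.1)) ∧ lift f (mk [y]) ≠ 1 := by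
    obtain ⟨i, s⟩ := y
    cases s
    · simpa [FreeGroup.lift_mk] using And.intro hother.inv_left (hf i)
    · simpa [FreeGroup.lift_mk] using And.intro hother (hf i)
  exact hy.1.overlap_add_overlap_lt hy.2 (lift_mk_singleton_of_isReduced (.inl hxy))
    (lift_mk_singleton_of_isReduced (.inr hyz))

end NielsenMinimal

section Generators

variable {G : Type*} [Group G]

lemma hom_ext_gen {f g : F2 →* G} (ha : f genA = g genA) (hb : f genB = g genB) : f = g :=
  FreeGroup.ext_hom _ _ (Bool.forall_bool.2 ⟨hb, ha⟩)

lemma aut_ext_gen {φ ψ : MulAut F2} (ha : φ genA = ψ genA) (hb : φ genB = ψ genB) : φ = ψ :=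
  MulEquiv.toMonoidHom_injective (hom_ext_gen ha hb)

/-- The homomorphism from `F₂` with prescribed images of `a` and `b`. -/
def homOfImages (u v : G) : F2 →* G := lift fun i ↦ cond i u v

@[simp] lemma homOfImages_genA (u v : G) : homOfImages u v genA = u := FreeGroup.lift_apply_of

@[simp] lemma homOfImages_genB (u v : G) : homOfImages u v genB = v := FreeGroup.lift_apply_of

/-- The automorphism exchanging `a` and `b`. -/
def swapAut : MulAut F2 :=
  (homOfImages genB genA).toMulEquiv (homOfImages genB genA)
    (hom_ext_gen (by simp) (by simp)) (hom_ext_gen (by simp) (by simp))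

@[simp] lemma swapAut_genA : swapAut genA = genB := by simp [swapAut]

@[simp] lemma swapAut_genB : swapAut genB = genA := by simp [swapAut]

/-- The automorphism inverting `a` and fixing `b`. -/
def flipAut : MulAut F2 :=
  (homOfImages genA⁻¹ genB).toMulEquiv (homOfImages genA⁻¹ genB)
    (hom_ext_gen (by simp) (by simp)) (hom_ext_gen (by simp) (by simp))

@[simp] lemma flipAut_genA : flipAut genA = genA⁻¹ := by simp [flipAut]

@[simp] lemma flipAut_genB : flipAut genB = genB := by simp [flipAut]

/-- The transvection `a ↦ a * b`, `b ↦ b`. -/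
def shearA : MulAut F2 :=
  (homOfImages (genA * genB) genB).toMulEquiv (homOfImages (genA * genB⁻¹) genB)
    (hom_ext_gen (by simp) (by simp)) (hom_ext_gen (by simp) (by simp))

@[simp] lemma shearA_genA : shearA genA = genA * genB := by simp [shearA]

@[simp] lemma shearA_genB : shearA genB = genB := by simp [shearA]

lemma swapAut_mul_self : swapAut * swapAut = 1 := aut_ext_gen (by simp) (by simp)

lemma flipAut_mul_self : flipAut * flipAut = 1 := aut_ext_gen (by simp) (by simp)

/-- The automorphisms permuting the four letters `a`, `a⁻¹`, `b`, `b⁻¹`. -/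
def signedPerms : Subgroup (MulAut F2) := Subgroup.closure {swapAut, flipAut}

lemma swapAut_mem_signedPerms : swapAut ∈ signedPerms := Subgroup.subset_closure (by simp)

lemma flipAut_mem_signedPerms : flipAut ∈ signedPerms := Subgroup.subset_closure (by simp)

lemma signedPerms_induction {p : MulAut F2 → Prop} (one : p 1)
    (swap_mul : ∀ σ, p σ → p (swapAut * σ)) (flip_mul : ∀ σ, p σ → p (flipAut * σ))
    {σ : MulAut F2} (hσ : σ ∈ signedPerms) : p σ := by
  have hswap : swapAut⁻¹ = swapAut := inv_eq_of_mul_eq_one_left swapAut_mul_self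
  have hflip : flipAut⁻¹ = flipAut := inv_eq_of_mul_eq_one_left flipAut_mul_self
  induction hσ using Subgroup.closure_induction_left with
  | one => exact one
  | mul_left x hx σ _ ih =>
    rcases hx with rfl | rfl
    exacts [swap_mul σ ih, flip_mul σ ih]
  | inv_mul_cancel x hx σ _ ih =>
    rcases hx with rfl | rfl
    exacts [hswap ▸ swap_mul σ ih, hflip ▸ flip_mul σ ih]

lemma norm_eq_one_iff {α : Type*} [DecidableEq α] {x : FreeGroup α} :
    x.norm = 1 ↔ ∃ i, x = of i ∨ x = (of i)⁻¹ := by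
  constructor
  · intro h
    obtain ⟨⟨i, s⟩, hword⟩ := List.length_eq_one_iff.1 h
    refine ⟨i, ?_⟩
    rw [← FreeGroup.mk_toWord (x := x), hword]
    cases s
    exacts [.inr rfl, .inl rfl]
  · rintro ⟨i, rfl | rfl⟩ <;> simp

lemma norm_eq_one_iff_gen {x : F2} :
    x.norm = 1 ↔ (x = genA ∨ x = genA⁻¹) ∨ x = genB ∨ x = genB⁻¹ := by
  simp only [norm_eq_one_iff, Bool.exists_bool, genA, genB]
  tauto

lemma norm_apply_eq_one_of_mem_signedPerms {σ : MulAut F2} (hσ : σ ∈ signedPerms) {x : F2}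
    (hx : x.norm = 1) : (σ x).norm = 1 := by
  refine signedPerms_induction (p := fun σ ↦ (σ x).norm = 1) hx (fun σ ih ↦ ?_) (fun σ ih ↦ ?_) hσ
  all_goals
    rw [MulAut.mul_apply, norm_eq_one_iff_gen]
    rcases norm_eq_one_iff_gen.1 ih with (h | h) | (h | h) <;> simp [h]

lemma exists_mem_signedPerms_apply_eq_genA {x : F2} (hx : x.norm = 1) :
    ∃ σ ∈ signedPerms, σ x = genA := by
  have hswap := swapAut_mem_signedPerms
  have hflip := flipAut_mem_signedPerms
  rcases norm_eq_one_iff_gen.1 hx with (rfl | rfl) | (rfl | rfl)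
  exacts [⟨1, one_mem _, rfl⟩, ⟨flipAut, hflip, by simp⟩, ⟨swapAut, hswap, by simp⟩,
    ⟨flipAut * swapAut, mul_mem hflip hswap, by simp⟩]

lemma mem_signedPerms_of_fixes_genA {φ : MulAut F2} (ha : φ genA = genA)
    (hb : (φ genB).norm = 1) : φ ∈ signedPerms := by
  have hne : genB ≠ genA := by decide
  have hne' : genB ≠ genA⁻¹ := by decide
  rcases norm_eq_one_iff_gen.1 hb with (h | h) | (h | h)
  · exact absurd (φ.injective (h.trans ha.symm)) hne
  · exact absurd (φ.injective (h.trans (by rw [map_inv, ha]))) hne'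
  · rw [aut_ext_gen (ψ := 1) ha h]
    exact one_mem _
  · rw [aut_ext_gen (φ := φ) (ψ := swapAut * flipAut * swapAut) (by simp [ha]) (by simp [h])]
    exact mul_mem (mul_mem swapAut_mem_signedPerms flipAut_mem_signedPerms) swapAut_mem_signedPerms

lemma mem_signedPerms_of_norm_eq_one {φ : MulAut F2} (ha : (φ genA).norm = 1)
    (hb : (φ genB).norm = 1) : φ ∈ signedPerms := by
  obtain ⟨σ, hσ, hσa⟩ := exists_mem_signedPerms_apply_eq_genA ha
  rw [← Subgroup.mul_mem_cancel_left _ hσ]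
  exact mem_signedPerms_of_fixes_genA hσa (norm_apply_eq_one_of_mem_signedPerms hσ hb)

end Generators

section NielsenGenerators

variable {H : Subgroup (MulAut F2)}

lemma conj_mem_innerF2 (g : F2) : MulAut.conj g ∈ innerF2 := ⟨g, rfl⟩

lemma NielsenEquiv.exists_aut (hinner : innerF2 ≤ H) (hperm : signedPerms ≤ H)
    (hshear : shearA ∈ H) (φ : MulAut F2) {u v : F2} (h : NielsenEquiv (φ genA) (φ genB) u v) :
    ∃ τ ∈ H, φ (τ genA) = u ∧ φ (τ genB) = v := by
  induction h with
  | refl => exact ⟨1, one_mem H, rfl, rfl⟩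
  | swap _ ih =>
    obtain ⟨τ, hτ, rfl, rfl⟩ := ih
    exact ⟨τ * swapAut, mul_mem hτ (hperm swapAut_mem_signedPerms), by simp, by simp⟩
  | inv _ ih =>
    obtain ⟨τ, hτ, rfl, rfl⟩ := ih
    exact ⟨τ * flipAut, mul_mem hτ (hperm flipAut_mem_signedPerms), by simp, by simp⟩
  | mul _ ih =>
    obtain ⟨τ, hτ, rfl, rfl⟩ := ih
    exact ⟨τ * shearA, mul_mem hτ hshear, by simp, by simp⟩
  | conj g _ ih =>
    obtain ⟨τ, hτ, rfl, rfl⟩ := ih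
    exact ⟨MulAut.conj (φ⁻¹ g) * τ, mul_mem (hinner (conj_mem_innerF2 _)) hτ, by simp, by simp⟩

lemma mem_signedPerms_of_isNielsenMinimal {φ : MulAut F2}
    (h : IsNielsenMinimal (φ genA) (φ genB)) : φ ∈ signedPerms := by
  have hreduced : IsNielsenReduced fun i ↦ φ (of i) :=
    h.isNielsenReduced fun i ↦ (map_ne_one_iff φ φ.injective).2 (FreeGroup.of_ne_one i)
  have hlift : lift (fun i ↦ φ (of i)) = φ.toMonoidHom := FreeGroup.ext_hom _ _ (by simp)
  have hletter (i : Bool) : (φ⁻¹ (of i)).norm = 1 := by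
    have hle := hreduced.norm_le_norm_lift (φ⁻¹ (of i))
    have hpos : (φ⁻¹ (of i)).norm ≠ 0 := FreeGroup.norm_eq_zero.not.2
      ((map_ne_one_iff _ φ⁻¹.injective).2 (FreeGroup.of_ne_one i))
    rw [hlift, MulEquiv.toMonoidHom_eq_coe, MonoidHom.coe_coe, MulAut.apply_inv_self,
      FreeGroup.norm_of] at hle
    omega
  exact inv_mem_iff.1 (mem_signedPerms_of_norm_eq_one (hletter true) (hletter false))

theorem eq_top_of_nielsen_generators_mem (hinner : innerF2 ≤ H) (hperm : signedPerms ≤ H)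
    (hshear : shearA ∈ H) : H = ⊤ := by
  refine (Subgroup.eq_top_iff' H).2 fun φ ↦ ?_
  obtain ⟨u, v, hequiv, hmin⟩ := exists_nielsenEquiv_isNielsenMinimal (φ genA) (φ genB)
  obtain ⟨τ, hτ, rfl, rfl⟩ := hequiv.exists_aut hinner hperm hshear φ
  exact (mul_mem_cancel_right hτ).1 (hperm (mem_signedPerms_of_isNielsenMinimal (φ := φ * τ) hmin))

end NielsenGenerators

section Exponents

open scoped commutatorElement

variable {α β : Type*} [DecidableEq α] [DecidableEq β]

/-- The abelianization map of a free group, with values written multiplicatively. -/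
def exponentHom : FreeGroup α →* Multiplicative (α → ℤ) :=
  lift fun i ↦ Multiplicative.ofAdd (Pi.single i 1)

/-- The vector of exponent sums of an element of a free group. -/
def exponents (x : FreeGroup α) : α → ℤ := (exponentHom x).toAdd

@[simp] lemma exponents_of (i : α) : exponents (of i) = Pi.single i 1 := by
  simp [exponents, exponentHom]

@[simp] lemma exponents_one : exponents (1 : FreeGroup α) = 0 := by simp [exponents]

@[simp] lemma exponents_mul (x y : FreeGroup α) :
    exponents (x * y) = exponents x + exponents y := by simp [exponents]

@[simp] lemma exponents_inv (x : FreeGroup α) : exponents x⁻¹ = -exponents x := by simp [exponents]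

@[simp] lemma exponents_pow (x : FreeGroup α) (n : ℕ) :
    exponents (x ^ n) = n • exponents x := by simp [exponents]

lemma exponents_commutator (x y : FreeGroup α) : exponents ⁅x, y⁆ = 0 := by
  simp [commutatorElement_def]

lemma exponents_hom_apply [Fintype α] (φ : FreeGroup α →* FreeGroup β) (x : FreeGroup α) :
    exponents (φ x) = ∑ i, exponents x i • exponents (φ (of i)) := by
  induction x using FreeGroup.induction_on with
  | C1 => simp
  | of i => simp [Pi.single_apply, ite_smul]
  | inv_of i _ => simp [Pi.single_apply, ite_smul]
  | mul x y hx hy => simp [hx, hy, add_smul, Finset.sum_add_distrib]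

lemma exponents_apply_congr [Finite α] {x y : FreeGroup α} (h : exponents x = exponents y)
    (φ : MulAut (FreeGroup α)) : exponents (φ x) = exponents (φ y) := by
  cases nonempty_fintype α
  exact (exponents_hom_apply φ.toMonoidHom x).trans
    (h ▸ (exponents_hom_apply φ.toMonoidHom y).symm)

lemma exponents_apply_ne_zero [Finite α] {x : FreeGroup α} (h : exponents x ≠ 0)
    (φ : MulAut (FreeGroup α)) : exponents (φ x) ≠ 0 := by
  intro hzero
  have hone := exponents_apply_congr (hzero.trans exponents_one.symm) φ⁻¹
  rw [MulAut.inv_apply_self, map_one, exponents_one] at hone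
  exact h hone

lemma sum_abs_exponents_of_norm_eq_one [Fintype α] {x : FreeGroup α} (h : x.norm = 1) :
    ∑ i, |exponents x i| = 1 := by
  obtain ⟨i, rfl | rfl⟩ := norm_eq_one_iff.1 h <;> simp [Pi.single_apply, apply_ite abs]

@[simp] lemma exponents_genA : exponents genA = Pi.single true 1 := exponents_of true

@[simp] lemma exponents_genB : exponents genB = Pi.single false 1 := exponents_of false

end Exponents

section NormalForm

instance innerF2_normal : innerF2.Normal where
  conj_mem := by
    rintro _ ⟨g, rfl⟩ φ
    exact ⟨φ g, by ext; simp⟩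

/-- The automorphisms of `F₂` that permute the letters up to an inner automorphism. -/
def monomialAuts : Subgroup (MulAut F2) := innerF2 ⊔ signedPerms

lemma innerF2_le_monomialAuts : innerF2 ≤ monomialAuts := le_sup_left

lemma signedPerms_le_monomialAuts : signedPerms ≤ monomialAuts := le_sup_right

lemma conj_mem_monomialAuts (g : F2) : MulAut.conj g ∈ monomialAuts :=
  innerF2_le_monomialAuts (conj_mem_innerF2 g)

lemma swapAut_mem_monomialAuts : swapAut ∈ monomialAuts :=
  signedPerms_le_monomialAuts swapAut_mem_signedPerms

lemma flipAut_mem_monomialAuts : flipAut ∈ monomialAuts :=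
  signedPerms_le_monomialAuts flipAut_mem_signedPerms

lemma mem_monomialAuts_iff {d : MulAut F2} :
    d ∈ monomialAuts ↔ ∃ g, ∃ σ ∈ signedPerms, d = MulAut.conj g * σ := by
  rw [monomialAuts, Subgroup.mem_sup_of_normal_left]
  simp [innerF2, eq_comm]

/-- The transvection `a ↦ a`, `b ↦ b * a`. -/
def shearB : MulAut F2 := swapAut * shearA * swapAut

@[simp] lemma shearB_genA : shearB genA = genA := by simp [shearB]

@[simp] lemma shearB_genB : shearB genB = genB * genA := by simp [shearB]

/-- The two transvections and their inverses. -/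
def shears : Set (MulAut F2) := {shearA, shearA⁻¹, shearB, shearB⁻¹}

/-- The automorphisms of `F₂` that are products of the transvections `shearA` and `shearB`. -/
def positiveAuts : Submonoid (MulAut F2) := Submonoid.closure {shearA, shearB}

lemma shearA_mem_positiveAuts : shearA ∈ positiveAuts := Submonoid.subset_closure (by simp)

lemma shearB_mem_positiveAuts : shearB ∈ positiveAuts := Submonoid.subset_closure (by simp)

lemma semiconjBy_swapAut_shearA : SemiconjBy swapAut shearA shearB :=
  aut_ext_gen (by simp) (by simp)

lemma semiconjBy_swapAut_shearB : SemiconjBy swapAut shearB shearA :=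
  aut_ext_gen (by simp) (by simp)

lemma semiconjBy_flipAut_shearB : SemiconjBy flipAut shearB shearB⁻¹ :=
  eq_inv_mul_of_mul_eq (aut_ext_gen (by simp) (by simp))

lemma flipAut_mul_shearA : flipAut * shearA = shearA⁻¹ * (MulAut.conj genB⁻¹ * flipAut) :=
  eq_inv_mul_of_mul_eq (aut_ext_gen (by simp) (by simp))

lemma flipAut_mul_inv_shearA : flipAut * shearA⁻¹ = shearA * (MulAut.conj genB * flipAut) :=
  mul_inv_eq_of_eq_mul (aut_ext_gen (by simp [mul_assoc]) (by simp))

lemma shearB_mul_inv_shearA :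
    shearB * shearA⁻¹ = shearA * (MulAut.conj genB * (swapAut * flipAut)) :=
  mul_inv_eq_of_eq_mul (aut_ext_gen (by simp [mul_assoc]) (by simp [mul_assoc]))

lemma shearA_mul_inv_shearB :
    shearA * shearB⁻¹ = shearB * (MulAut.conj genA * (flipAut * swapAut)) :=
  mul_inv_eq_of_eq_mul (aut_ext_gen (by simp [mul_assoc]) (by simp [mul_assoc]))

lemma exists_shear_swapAut_mul {e : MulAut F2} (he : e ∈ shears) :
    ∃ e' ∈ shears, swapAut * e = e' * swapAut := by
  rcases he with rfl | rfl | rfl | rfl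
  exacts [⟨shearB, by simp [shears], semiconjBy_swapAut_shearA⟩,
    ⟨shearB⁻¹, by simp [shears], semiconjBy_swapAut_shearA.inv_right⟩,
    ⟨shearA, by simp [shears], semiconjBy_swapAut_shearB⟩,
    ⟨shearA⁻¹, by simp [shears], semiconjBy_swapAut_shearB.inv_right⟩]

lemma exists_shear_flipAut_mul {e : MulAut F2} (he : e ∈ shears) :
    ∃ e' ∈ shears, ∃ d ∈ monomialAuts, flipAut * e = e' * d := by
  have hflip := flipAut_mem_monomialAuts
  have hconj (g : F2) := mul_mem (conj_mem_monomialAuts g) hflip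
  rcases he with rfl | rfl | rfl | rfl
  exacts [⟨shearA⁻¹, by simp [shears], _, hconj _, flipAut_mul_shearA⟩,
    ⟨shearA, by simp [shears], _, hconj _, flipAut_mul_inv_shearA⟩,
    ⟨shearB⁻¹, by simp [shears], _, hflip, semiconjBy_flipAut_shearB⟩,
    ⟨shearB, by simp [shears], _, hflip, by simpa using semiconjBy_flipAut_shearB.inv_right.eq⟩]

lemma exists_shear_signedPerm_mul {σ : MulAut F2} (hσ : σ ∈ signedPerms) {e : MulAut F2}
    (he : e ∈ shears) : ∃ e' ∈ shears, ∃ d ∈ monomialAuts, σ * e = e' * d := by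
  refine signedPerms_induction
    (p := fun σ ↦ ∃ e' ∈ shears, ∃ d ∈ monomialAuts, σ * e = e' * d)
    ⟨e, he, 1, one_mem _, by simp⟩ ?_ ?_ hσ
  · rintro σ ⟨e', he', d, hd, hσe⟩
    obtain ⟨e'', he'', hswap⟩ := exists_shear_swapAut_mul he'
    exact ⟨e'', he'', swapAut * d, mul_mem swapAut_mem_monomialAuts hd, by
      rw [mul_assoc, hσe, ← mul_assoc, hswap, mul_assoc]⟩
  · rintro σ ⟨e', he', d, hd, hσe⟩
    obtain ⟨e'', he'', d', hd', hflip⟩ := exists_shear_flipAut_mul he'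
    exact ⟨e'', he'', d' * d, mul_mem hd' hd, by
      rw [mul_assoc, hσe, ← mul_assoc, hflip, mul_assoc]⟩

lemma exists_shear_monomialAut_mul {d : MulAut F2} (hd : d ∈ monomialAuts) {e : MulAut F2}
    (he : e ∈ shears) : ∃ e' ∈ shears, ∃ d' ∈ monomialAuts, d * e = e' * d' := by
  obtain ⟨g, σ, hσ, rfl⟩ := mem_monomialAuts_iff.1 hd
  obtain ⟨e', he', d', hd', hσe⟩ := exists_shear_signedPerm_mul hσ he
  refine ⟨e', he', MulAut.conj (e'⁻¹ g) * d', mul_mem (conj_mem_monomialAuts _) hd', ?_⟩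
  rw [mul_assoc, hσe]
  ext x
  simp

/-- The double coset of the positive automorphisms under the monomial ones. It turns out to be
all of `Aut(F₂)`: up to conjugation and signed permutations of the letters on both sides, every
automorphism of `F₂` is positive. -/
def monomialPositiveAuts : Set (MulAut F2) :=
  {φ | ∃ d ∈ monomialAuts, ∃ P ∈ positiveAuts, ∃ d' ∈ monomialAuts, d * P * d' = φ}

lemma shears_subset_monomialPositiveAuts : shears ⊆ monomialPositiveAuts := by
  have hflip := flipAut_mem_monomialAuts
  have of_flipAut_mul {e P d : MulAut F2} (hP : P ∈ positiveAuts) (hd : d ∈ monomialAuts)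
      (h : flipAut * e = P * d) : e ∈ monomialPositiveAuts :=
    ⟨flipAut, hflip, P, hP, d, hd, by
      rw [mul_assoc, ← h, ← mul_assoc, flipAut_mul_self, one_mul]⟩
  rintro e (rfl | rfl | rfl | rfl)
  · exact ⟨1, one_mem _, shearA, shearA_mem_positiveAuts, 1, one_mem _, by simp⟩
  · exact of_flipAut_mul shearA_mem_positiveAuts (mul_mem (conj_mem_monomialAuts _) hflip)
      flipAut_mul_inv_shearA
  · exact ⟨1, one_mem _, shearB, shearB_mem_positiveAuts, 1, one_mem _, by simp⟩
  · exact of_flipAut_mul shearB_mem_positiveAuts hflip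
      (by simpa using semiconjBy_flipAut_shearB.inv_right.eq)

lemma exists_positive_shear_mul_shear {f : MulAut F2} (hf : f = shearA ∨ f = shearB)
    {e : MulAut F2} (he : e ∈ shears) :
    ∃ P ∈ positiveAuts, ∃ d ∈ monomialAuts, f * e = P * d := by
  have hA := shearA_mem_positiveAuts
  have hB := shearB_mem_positiveAuts
  have hswap := swapAut_mem_monomialAuts
  have hflip := flipAut_mem_monomialAuts
  have hf_mem : f ∈ positiveAuts := by rcases hf with rfl | rfl <;> assumption
  rcases he with rfl | rfl | rfl | rfl
  · exact ⟨f * shearA, mul_mem hf_mem hA, 1, one_mem _, by simp⟩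
  · rcases hf with rfl | rfl
    · exact ⟨1, one_mem _, 1, one_mem _, by simp⟩
    · exact ⟨shearA, hA, _, mul_mem (conj_mem_monomialAuts _) (mul_mem hswap hflip),
        shearB_mul_inv_shearA⟩
  · exact ⟨f * shearB, mul_mem hf_mem hB, 1, one_mem _, by simp⟩
  · rcases hf with rfl | rfl
    · exact ⟨shearB, hB, _, mul_mem (conj_mem_monomialAuts _) (mul_mem hflip hswap),
        shearA_mul_inv_shearB⟩
    · exact ⟨1, one_mem _, 1, one_mem _, by simp⟩

lemma positive_mul_shear_mem_monomialPositiveAuts {P : MulAut F2} (hP : P ∈ positiveAuts)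
    {e : MulAut F2} (he : e ∈ shears) : P * e ∈ monomialPositiveAuts := by
  induction hP using Submonoid.closure_induction_right with
  | one => simpa using shears_subset_monomialPositiveAuts he
  | mul_right P hP f hf _ =>
    obtain ⟨Q, hQ, d, hd, hfe⟩ := exists_positive_shear_mul_shear hf he
    exact ⟨1, one_mem _, P * Q, mul_mem hP hQ, d, hd, by rw [one_mul, mul_assoc, ← hfe, mul_assoc]⟩

lemma mul_mem_monomialPositiveAuts {φ d : MulAut F2} (hφ : φ ∈ monomialPositiveAuts)
    (hd : d ∈ monomialAuts) : φ * d ∈ monomialPositiveAuts := by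
  obtain ⟨d₁, hd₁, P, hP, d₂, hd₂, rfl⟩ := hφ
  exact ⟨d₁, hd₁, P, hP, d₂ * d, mul_mem hd₂ hd, (mul_assoc _ _ _).symm⟩

lemma mul_shear_mem_monomialPositiveAuts {φ e : MulAut F2} (hφ : φ ∈ monomialPositiveAuts)
    (he : e ∈ shears) : φ * e ∈ monomialPositiveAuts := by
  obtain ⟨d₁, hd₁, P, hP, d₂, hd₂, rfl⟩ := hφ
  obtain ⟨e', he', d₃, hd₃, hcomm⟩ := exists_shear_monomialAut_mul hd₂ he
  obtain ⟨d₄, hd₄, Q, hQ, d₅, hd₅, hPe⟩ := positive_mul_shear_mem_monomialPositiveAuts hP he'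
  refine ⟨d₁ * d₄, mul_mem hd₁ hd₄, Q, hQ, d₅ * d₃, mul_mem hd₅ hd₃, ?_⟩
  calc d₁ * d₄ * Q * (d₅ * d₃) = d₁ * (d₄ * Q * d₅) * d₃ := by group
    _ = d₁ * P * (e' * d₃) := by rw [hPe]; group
    _ = d₁ * P * d₂ * e := by rw [← hcomm]; group

theorem mem_monomialPositiveAuts (φ : MulAut F2) : φ ∈ monomialPositiveAuts := by
  have hgen : Subgroup.closure (insert shearA (monomialAuts : Set (MulAut F2))) = ⊤ := by
    have hle : monomialAuts ≤ Subgroup.closure (insert shearA (monomialAuts : Set (MulAut F2))) :=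
      (Set.subset_insert _ _).trans Subgroup.subset_closure
    exact eq_top_of_nielsen_generators_mem (innerF2_le_monomialAuts.trans hle)
      (signedPerms_le_monomialAuts.trans hle) (Subgroup.subset_closure (Set.mem_insert _ _))
  have hφ : φ ∈ Subgroup.closure (insert shearA (monomialAuts : Set (MulAut F2))) :=
    hgen ▸ Subgroup.mem_top φ
  induction hφ using Subgroup.closure_induction_right with
  | one => exact ⟨1, one_mem _, 1, one_mem _, 1, one_mem _, by simp⟩
  | mul_right φ _ x hx ih =>
    rcases hx with rfl | hx
    exacts [mul_shear_mem_monomialPositiveAuts ih (by simp [shears]),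
      mul_mem_monomialPositiveAuts ih hx]
  | mul_inv_cancel φ _ x hx ih =>
    rcases hx with rfl | hx
    exacts [mul_shear_mem_monomialPositiveAuts ih (by simp [shears]),
      mul_mem_monomialPositiveAuts ih (inv_mem hx)]

end NormalForm

section TrivialOnAbelianization

lemma sum_abs_exponents_monomialAut {d : MulAut F2} (hd : d ∈ monomialAuts) (i : Bool) :
    ∑ j, |exponents (d (of i)) j| = 1 := by
  obtain ⟨g, σ, hσ, rfl⟩ := mem_monomialAuts_iff.1 hd
  simpa using sum_abs_exponents_of_norm_eq_one
    (norm_apply_eq_one_of_mem_signedPerms hσ (FreeGroup.norm_of i))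

lemma exponents_positiveAut {P : MulAut F2} (hP : P ∈ positiveAuts) :
    1 ≤ exponents (P genA) true ∧ 0 ≤ exponents (P genA) false ∧
      0 ≤ exponents (P genB) true ∧ 1 ≤ exponents (P genB) false ∧
      (P ≠ 1 → 1 ≤ exponents (P genA) false + exponents (P genB) true) := by
  induction hP using Submonoid.closure_induction_right with
  | one => simp
  | mul_right P _ f hf ih =>
    obtain ⟨haa, hab, hba, hbb, -⟩ := ih
    rcases hf with rfl | rfl <;>
      simp only [MulAut.mul_apply, shearA_genA, shearA_genB, shearB_genA, shearB_genB, map_mul,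
        exponents_mul, Pi.add_apply] <;>
      omega

lemma eq_one_of_exponents_eq_monomialAut {P d : MulAut F2} (hP : P ∈ positiveAuts)
    (hd : d ∈ monomialAuts) (h : ∀ i, exponents (P (of i)) = exponents (d (of i))) : P = 1 := by
  have hcolumn (i : Bool) :
      |exponents (P (of i)) true| + |exponents (P (of i)) false| = 1 := by
    simpa only [h, Fintype.sum_bool] using sum_abs_exponents_monomialAut hd i
  obtain ⟨haa, hab, hba, hbb, hne⟩ := exponents_positiveAut hP
  have hA : |exponents (P genA) true| + |exponents (P genA) false| = 1 := hcolumn true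
  have hB : |exponents (P genB) true| + |exponents (P genB) false| = 1 := hcolumn false
  rw [abs_of_nonneg (by omega), abs_of_nonneg (by omega)] at hA hB
  by_contra hP_ne
  have := hne hP_ne
  omega

lemma eq_of_norm_eq_one_of_exponents_eq {α : Type*} [DecidableEq α] {x : FreeGroup α} {i : α}
    (hx : x.norm = 1) (h : exponents x = Pi.single i 1) : x = of i := by
  have hi := congrFun h i
  obtain ⟨j, rfl | rfl⟩ := norm_eq_one_iff.1 hx <;> obtain rfl | hij := eq_or_ne i j <;> simp_all

lemma exponents_apply_eq_self {α : Type*} [DecidableEq α] [Finite α] {φ : MulAut (FreeGroup α)}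
    (h : ∀ i, exponents (φ (of i)) = Pi.single i 1) (x : FreeGroup α) :
    exponents (φ x) = exponents x := by
  cases nonempty_fintype α
  rw [← MulEquiv.coe_toMonoidHom, exponents_hom_apply]
  simp [h, ← Pi.single_smul, Finset.univ_sum_single]

theorem mem_innerF2_of_exponents_eq_single {φ : MulAut F2}
    (h : ∀ i, exponents (φ (of i)) = Pi.single i 1) : φ ∈ innerF2 := by
  obtain ⟨d, hd, P, hP, d', hd', rfl⟩ := mem_monomialPositiveAuts φ
  obtain rfl : P = 1 := by
    refine eq_one_of_exponents_eq_monomialAut hP (mul_mem (inv_mem hd) (inv_mem hd')) fun i ↦ ?_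
    have hi := exponents_apply_congr (exponents_apply_eq_self h (d'⁻¹ (of i))) d⁻¹
    simpa using hi
  obtain ⟨g, σ, hσ, hdd'⟩ := mem_monomialAuts_iff.1 (mul_mem hd hd')
  rw [mul_one, hdd'] at h ⊢
  have hletter (i : Bool) : σ (of i) = of i :=
    eq_of_norm_eq_one_of_exponents_eq
      (norm_apply_eq_one_of_mem_signedPerms hσ (FreeGroup.norm_of i)) (by simpa using h i)
  rw [aut_ext_gen (φ := σ) (ψ := 1) (hletter true) (hletter false), mul_one]
  exact conj_mem_innerF2 g

end TrivialOnAbelianization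

section CommutatorClass

open scoped commutatorElement

variable {G : Type*} [Group G]

lemma isConj_inv_inv {x y : G} (h : IsConj x y) : IsConj x⁻¹ y⁻¹ := by
  obtain ⟨g, rfl⟩ := isConj_iff.1 h
  exact isConj_iff.2 ⟨g, conj_inv.symm⟩

/-- The automorphisms that map `c` to a conjugate of `c` or of `c⁻¹`. -/
def conjInvStabilizer (c : G) : Subgroup (MulAut G) where
  carrier := {φ | IsConj c (φ c) ∨ IsConj c⁻¹ (φ c)}
  one_mem' := .inl (IsConj.refl c)
  mul_mem' := by
    rintro φ ψ hφ (hψ | hψ)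
    · have h := φ.toMonoidHom.map_isConj hψ
      exact hφ.imp (·.trans h) (·.trans h)
    · have h : IsConj (φ c)⁻¹ (φ (ψ c)) := map_inv φ c ▸ φ.toMonoidHom.map_isConj hψ
      exact hφ.symm.imp (fun hc ↦ (inv_inv c ▸ isConj_inv_inv hc).trans h)
        (fun hc ↦ (isConj_inv_inv hc).trans h)
  inv_mem' := by
    rintro φ (hφ | hφ)
    · have h := φ⁻¹.toMonoidHom.map_isConj hφ
      exact .inl (by simpa using h.symm)
    · have h := isConj_inv_inv (φ⁻¹.toMonoidHom.map_isConj hφ)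
      exact .inr (by simpa using h.symm)

theorem isConj_or_isConj_inv_commutator (φ : MulAut F2) :
    IsConj ⁅genA, genB⁆ (φ ⁅genA, genB⁆) ∨ IsConj ⁅genA, genB⁆⁻¹ (φ ⁅genA, genB⁆) := by
  suffices htop : conjInvStabilizer ⁅genA, genB⁆ = ⊤ from
    (Subgroup.eq_top_iff' _).1 htop φ
  refine eq_top_of_nielsen_generators_mem ?_ ((Subgroup.closure_le _).2 ?_) ?_
  · rintro _ ⟨g, rfl⟩
    exact .inl (isConj_iff.2 ⟨g, rfl⟩)
  · rintro _ (rfl | rfl)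
    · exact .inr (isConj_iff.2 ⟨1, by simp [commutatorElement_def, mul_assoc]⟩)
    · exact .inr (isConj_iff.2 ⟨genA⁻¹, by simp [commutatorElement_def, mul_assoc]⟩)
  · exact .inl (isConj_iff.2 ⟨1, by simp [commutatorElement_def, mul_assoc]⟩)

lemma exists_conj_commutator (φ : MulAut F2) :
    ∃ g, φ ⁅genA, genB⁆ = g * ⁅genA, genB⁆ * g⁻¹ ∨
      φ ⁅genA, genB⁆ = (g * ⁅genA, genB⁆ * g⁻¹)⁻¹ := by
  rcases isConj_or_isConj_inv_commutator φ with h | h <;> obtain ⟨g, hg⟩ := isConj_iff.1 h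
  exacts [⟨g, .inl hg.symm⟩, ⟨g, .inr (by rw [← hg, conj_inv])⟩]

end CommutatorClass

section Holonomy

open scoped commutatorElement

variable {K : Type*} [Group K] (F : (Bool → ℤ) → K)

/-- The representation of `F₂` in `K ≀ ℤ²` encoding parallel transport on the grid `ℤ²`, where
the horizontal edges carry the label `1` and the vertical edge from `p` to `p + e_b` carries the
label `F p`. The left component of the image of `x`, evaluated at `-p`, is the product of the labels
along the path spelled by `x` from `p`. -/
def transport : F2 →* K ≀ᵣ Multiplicative (Bool → ℤ) :=
  homOfImages ⟨1, Multiplicative.ofAdd (Pi.single true 1)⟩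
    ⟨fun z ↦ F (-z.toAdd), Multiplicative.ofAdd (Pi.single false 1)⟩

lemma transport_right (x : F2) : (transport F x).right = Multiplicative.ofAdd (exponents x) := by
  have h : RegularWreathProduct.rightHom.comp (transport F) = exponentHom :=
    hom_ext_gen (by simp [transport, ← exponents_genA, exponents])
      (by simp [transport, ← exponents_genB, exponents])
  exact DFunLike.congr_fun h x

/-- The product of the edge labels along the path in `ℤ²` spelled by `x` from the origin. -/
def holonomy (x : F2) : K := (transport F x).left 1

@[simp] lemma holonomy_one : holonomy F 1 = 1 := by simp [holonomy]

/-- The product of the edge labels around the unit square with lower left corner `p`. -/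
def curl (p : Bool → ℤ) : K := F (p + Pi.single true 1) * (F p)⁻¹

variable {F} {x y : F2}

lemma holonomy_mul (hx : exponents x = 0) :
    holonomy F (x * y) = holonomy F x * holonomy F y := by
  simp [holonomy, transport_right, hx]

lemma holonomy_inv (hx : exponents x = 0) : holonomy F x⁻¹ = (holonomy F x)⁻¹ := by
  simp [holonomy, transport_right, hx]

lemma holonomy_commutator (hx : exponents x = 0) (hy : exponents y = 0) :
    holonomy F ⁅x, y⁆ = ⁅holonomy F x, holonomy F y⁆ := by
  simp [commutatorElement_def, holonomy_mul, holonomy_inv, hx, hy]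

lemma transport_commutator_left (z : Multiplicative (Bool → ℤ)) :
    (transport F ⁅genA, genB⁆).left z = curl F (-z.toAdd) := by
  simp [transport, curl, commutatorElement_def, add_comm]

lemma holonomy_conj_commutator (g : F2) : holonomy F (g * ⁅genA, genB⁆ * g⁻¹) =
    holonomy F g * curl F (exponents g) * (holonomy F g)⁻¹ := by
  simp [-map_commutatorElement, holonomy, transport_right, transport_commutator_left,
    exponents_commutator]

variable (F) in
/-- The elements of the commutator subgroup of `F₂` with trivial holonomy. -/
def holonomyKernel : Subgroup F2 where
  carrier := {x | exponents x = 0 ∧ holonomy F x = 1}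
  one_mem' := by simp
  mul_mem' := fun ⟨hx, hx'⟩ ⟨hy, hy'⟩ ↦ by simp [holonomy_mul, hx, hx', hy, hy']
  inv_mem' := fun ⟨hx, hx'⟩ ↦ by simp [holonomy_inv, hx, hx']

lemma holonomy_aut_conj_commutator {φ : MulAut F2} {g : F2}
    (hg : φ ⁅genA, genB⁆ = g * ⁅genA, genB⁆ * g⁻¹ ∨ φ ⁅genA, genB⁆ = (g * ⁅genA, genB⁆ * g⁻¹)⁻¹)
    {u : F2} (hcurl : curl F (exponents (φ u) + exponents g) = 1) :
    holonomy F (φ (u * ⁅genA, genB⁆ * u⁻¹)) = 1 := by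
  have hone : holonomy F (φ u * g * ⁅genA, genB⁆ * (φ u * g)⁻¹) = 1 := by
    rw [holonomy_conj_commutator, exponents_mul, hcurl, mul_one, mul_inv_cancel]
  rcases hg with hg | hg
  · rw [← hone, map_mul, map_mul, hg, map_inv]
    group
  · rw [← inv_inj, ← holonomy_inv (by simp [hg, exponents_commutator]), inv_one, ← hone,
      map_mul, map_mul, hg, map_inv]
    group

end Holonomy

section TestWord

open scoped commutatorElement

/-- The three lattice points `(0, 0)`, `(2, 0)` and `(0, 3)`, with coordinates indexed by
`true` (for `a`) and `false` (for `b`). -/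
def testPoints : Set (Bool → ℤ) :=
  {p | p true = 0 ∧ p false = 0 ∨ p true = 2 ∧ p false = 0 ∨ p true = 0 ∧ p false = 3}

lemma eq_single_of_mem_testPoints {t A B : Bool → ℤ} (hA : A ≠ 0) (hB : B ≠ 0)
    (ht : t ∈ testPoints) (hAt : 2 • A + t ∈ testPoints) (hBt : 3 • B + t ∈ testPoints) :
    A = Pi.single true 1 ∧ B = Pi.single false 1 := by
  simp only [Ne, funext_iff, Bool.forall_bool, Pi.zero_apply] at hA hB
  simp only [testPoints, Set.mem_ofPred_eq, Pi.add_apply, nsmul_eq_mul,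
    Pi.mul_apply, Nat.cast_ofNat, Pi.ofNat_apply] at ht hAt hBt
  simp only [funext_iff, Bool.forall_bool, Pi.single_apply, Bool.false_eq_true, Bool.true_eq_false,
    if_true, if_false]
  omega

variable {K : Type*} [Group K] (x y z : K)

/-- Edge labels on `ℤ²` whose curl is `x`, `y`, `z` at the three test points and `1` elsewhere. -/
def testLabels (p : Bool → ℤ) : K :=
  if p false = 0 then if p true ≤ 0 then 1 else if p true ≤ 2 then x else y * x
  else if p false = 3 then if p true ≤ 0 then 1 else z else 1

lemma curl_testLabels_of_notMem {p : Bool → ℤ} (hp : p ∉ testPoints) :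
    curl (testLabels x y z) p = 1 := by
  simp only [testPoints, Set.mem_ofPred_eq] at hp
  rw [curl, mul_inv_eq_one]
  simp only [testLabels, Pi.add_apply, Pi.single_apply, Bool.false_eq_true, if_true, if_false,
    add_zero]
  split_ifs <;> first | rfl | omega

/-- The iterated commutator of the conjugates of `[a, b]` sitting at the three test points. It has
nontrivial holonomy only if each of its three entries has. -/
def testWord : F2 :=
  ⁅⁅⁅genA, genB⁆, genA ^ 2 * ⁅genA, genB⁆ * (genA ^ 2)⁻¹⁆,
    genB ^ 3 * ⁅genA, genB⁆ * (genB ^ 3)⁻¹⁆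

lemma exponents_aut_conj_commutator (φ : MulAut F2) (u : F2) :
    exponents (φ (u * ⁅genA, genB⁆ * u⁻¹)) = 0 := by
  simp [map_commutatorElement, exponents_commutator]

lemma holonomy_aut_testWord (F : (Bool → ℤ) → K) (φ : MulAut F2) : holonomy F (φ testWord) =
    ⁅⁅holonomy F (φ (1 * ⁅genA, genB⁆ * 1⁻¹)),
      holonomy F (φ (genA ^ 2 * ⁅genA, genB⁆ * (genA ^ 2)⁻¹))⁆,
      holonomy F (φ (genB ^ 3 * ⁅genA, genB⁆ * (genB ^ 3)⁻¹))⁆ := by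
  have h := exponents_aut_conj_commutator φ
  rw [testWord, map_commutatorElement, map_commutatorElement,
    holonomy_commutator (exponents_commutator _ _) (h _),
    holonomy_commutator (by simpa using h 1) (h _)]
  simp

lemma holonomy_testWord : holonomy (testLabels x y z) testWord = ⁅⁅x, y⁆, z⁆ := by
  have hc : holonomy (testLabels x y z) ⁅genA, genB⁆ = x := by
    simpa [curl, testLabels] using holonomy_conj_commutator (F := testLabels x y z) 1
  have hA : holonomy (testLabels x y z) (genA ^ 2) = 1 := by
    simp [holonomy, transport, pow_succ]
  have hB : holonomy (testLabels x y z) (genB ^ 3) = 1 := by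
    simp [holonomy, transport, pow_succ, testLabels]
  have h := holonomy_aut_testWord (testLabels x y z) 1
  simpa [holonomy_conj_commutator, hc, hA, hB, curl, testLabels] using h

lemma holonomy_aut_testWord_eq_one {φ : MulAut F2} (hφ : φ ∉ innerF2) :
    holonomy (testLabels x y z) (φ testWord) = 1 := by
  obtain ⟨g, hg⟩ := exists_conj_commutator φ
  have htrivial {u : F2} (hu : exponents (φ u) + exponents g ∉ testPoints) :
      holonomy (testLabels x y z) (φ (u * ⁅genA, genB⁆ * u⁻¹)) = 1 :=
    holonomy_aut_conj_commutator hg (curl_testLabels_of_notMem x y z hu)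
  rw [holonomy_aut_testWord]
  by_contra hne
  have h₁ : exponents (φ 1) + exponents g ∈ testPoints := by
    by_contra hp
    exact hne (by rw [htrivial hp]; simp)
  have hA : exponents (φ (genA ^ 2)) + exponents g ∈ testPoints := by
    by_contra hp
    exact hne (by rw [htrivial hp]; simp)
  have hB : exponents (φ (genB ^ 3)) + exponents g ∈ testPoints := by
    by_contra hp
    exact hne (by rw [htrivial hp]; simp)
  rw [map_pow, exponents_pow] at hA hB
  obtain ⟨hφA, hφB⟩ := eq_single_of_mem_testPoints (exponents_apply_ne_zero (by simp) φ)
    (exponents_apply_ne_zero (by simp) φ) (by simpa using h₁) hA hB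
  exact hφ (mem_innerF2_of_exponents_eq_single (Bool.forall_bool.2 ⟨hφB, hφA⟩))

end TestWord

lemma notMem_closure_conj_of_isConj {G : Type*} [Group G] {w x : G} {S : Subgroup G}
    (hS : ∀ φ : MulAut G, φ ∉ MulAut.conj.range → φ w ∈ S) (hw : w ∉ S) (hx : IsConj w x) :
    x ∉ Subgroup.closure {y | ∃ φ : MulAut G, φ ∉ MulAut.conj.range ∧ IsConj (φ w) y} := by
  intro hmem
  obtain ⟨g, hg⟩ := isConj_iff.1 hx.symm
  have hle : Subgroup.closure {y | ∃ φ : MulAut G, φ ∉ MulAut.conj.range ∧ IsConj (φ w) y} ≤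
      S.comap (MulAut.conj g).toMonoidHom := by
    rw [Subgroup.closure_le]
    rintro y ⟨φ, hφ, hy⟩
    obtain ⟨h, hh⟩ := isConj_iff.1 (hy.trans (isConj_iff.2 ⟨g, rfl⟩))
    have hne : MulAut.conj h * φ ∉ MulAut.conj.range :=
      (Subgroup.mul_mem_cancel_left _ (MonoidHom.mem_range.2 ⟨h, rfl⟩)).not.2 hφ
    have hmem_conj : g * y * g⁻¹ ∈ S := hh ▸ hS _ hne
    exact hmem_conj
  exact hw (hg ▸ hle hmem)

/-- **Corollary 1.7 / 8.24.** There is a conjugacy class `c` of `F₂` (namely that of some `w`)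
which is disjoint from the subgroup of `F₂` generated by the conjugacy classes `g·c`,
`g ∈ Out(F₂) \ {e}`; equivalently, no conjugate of `w` lies in the subgroup generated by
`{φ(x) : x conjugate to w, φ ∈ Aut(F₂) non-inner}`. -/
theorem conjugacy_class_disjoint_from_translates :
    ∃ w : F2, ∀ x : F2, IsConj w x →
      x ∉ Subgroup.closure
        {y : F2 | ∃ φ : MulAut F2, φ ∉ innerF2 ∧ IsConj (φ w) y} := by
  let F := testLabels (Equiv.swap 0 1 : Equiv.Perm (Fin 3)) (Equiv.swap 1 2) (Equiv.swap 0 1)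
  have hw : testWord ∉ holonomyKernel F := fun h ↦
    absurd ((holonomy_testWord _ _ _).symm.trans h.2) (by decide)
  have hS (φ : MulAut F2) (hφ : φ ∉ innerF2) : φ testWord ∈ holonomyKernel F :=
    ⟨by rw [testWord, map_commutatorElement, exponents_commutator],
      holonomy_aut_testWord_eq_one _ _ _ hφ⟩
  exact ⟨testWord, fun _ ↦ notMem_closure_conj_of_isConj hS hw⟩

end IRSPaper
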